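/- With variables x, y, z, the system of three word equations x² = y, y² = z, z² = x is an independent system, with solutions taken in the free semigroup on two letters. Hence is₊(3) ≥ 3. -/

import Mathlib

/-- A semigroup morphism `h` from the free semigroup on the variables `Ξ` to a
semigroup `S` is a solution of the equation `E = (U, V)` if `h U = h V`. -/
def IsSolutionS {Ξ S : Type*} [Semigroup S] (h : FreeSemigroup Ξ →ₙ* S)
    (E : FreeSemigroup Ξ × FreeSemigroup Ξ) : Prop :=
  h E.1 = h E.2

/-- The variable `x`. -/
def x : FreeSemigroup (Fin 3) := FreeSemigroup.of 0
/-- The variable `y`. -/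
def y : FreeSemigroup (Fin 3) := FreeSemigroup.of 1
/-- The variable `z`. -/
def z : FreeSemigroup (Fin 3) := FreeSemigroup.of 2

/-- The system of equations `x² = y, y² = z, z² = x`. -/
def system : Fin 3 → FreeSemigroup (Fin 3) × FreeSemigroup (Fin 3) :=
  ![(x * x, y), (y * y, z), (z * z, x)]

/-!
The equations of the cyclic system `x_j² = x_{j+1}` other than the `i`-th form a chain starting at
`x_{i+1}` and ending at `x_i`, so they are solved by sending the variables along that chain to
`a, a², a⁴, …`. With `n + 1` variables, the remaining equation then reads `a ^ 2 ^ (n + 1) = a`,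
which fails in a free semigroup because the two sides have different lengths.
-/

/-- Independence of a family of equations, with solutions taken in the semigroup `S`: each equation
fails for some morphism that solves all the others. -/
def IsIndependentIn (S : Type*) [Semigroup S] {Ξ ι : Type*}
    (E : ι → FreeSemigroup Ξ × FreeSemigroup Ξ) : Prop :=
  ∀ i, ∃ h : FreeSemigroup Ξ →ₙ* S, (∀ j, j ≠ i → IsSolutionS h (E j)) ∧ ¬ IsSolutionS h (E i)

/-- The cyclic system of equations `x_j² = x_{j+1}` in `n + 1` variables; addition in `Fin (n + 1)`
wraps around, so the last equation is `x_n² = x_0`. -/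
def cyclicSquareSystem (n : ℕ) (j : Fin (n + 1)) :
    FreeSemigroup (Fin (n + 1)) × FreeSemigroup (Fin (n + 1)) :=
  (FreeSemigroup.of j * FreeSemigroup.of j, FreeSemigroup.of (j + 1))

/-- The power `a ^ 2 ^ k`, obtained by squaring `k` times because a semigroup carries no powers with
exponents in `ℕ`. -/
def iteratedSquare {M : Type*} [Mul M] (a : M) : ℕ → M
  | 0 => a
  | k + 1 => iteratedSquare a k * iteratedSquare a k

section FreeSemigroup

variable {α : Type*} (w : FreeSemigroup α)

theorem length_iteratedSquare (k : ℕ) : (iteratedSquare w k).length = 2 ^ k * w.length := by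
  induction k with
  | zero => simp only [iteratedSquare, pow_zero, one_mul]
  | succ k ih => rw [iteratedSquare, FreeSemigroup.length_mul, ih]; ring

theorem iteratedSquare_ne_self {k : ℕ} (hk : k ≠ 0) : iteratedSquare w k ≠ w := by
  intro h
  have length_eq : 2 ^ k * w.length = w.length := by rw [← length_iteratedSquare, h]
  have length_pos : 0 < w.length := Nat.succ_pos _
  exact (lt_mul_of_one_lt_left length_pos (Nat.one_lt_two_pow hk)).ne' length_eq

end FreeSemigroup

section Cyclic

variable {n : ℕ}

theorem sub_succ_self_eq_last (i : Fin (n + 1)) : i - (i + 1) = Fin.last n := by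
  rw [sub_add_cancel_left, Fin.ext_iff, Fin.coe_neg_one, Fin.val_last]

theorem val_succ_sub_succ {i j : Fin (n + 1)} (hij : j ≠ i) :
    (j + 1 - (i + 1)).val = (j - (i + 1)).val + 1 := by
  have ne_last : j - (i + 1) ≠ Fin.last n := by
    rw [← sub_succ_self_eq_last i]
    exact sub_left_injective.ne hij
  rw [← sub_add_eq_add_sub, Fin.val_add_one_of_lt (Fin.lt_last_iff_ne_last.mpr ne_last)]

theorem system_independent_general {S : Type*} [Semigroup S] {a : S}
    (ha : iteratedSquare a (n + 1) ≠ a) : IsIndependentIn S (cyclicSquareSystem n) := by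
  intro i
  refine ⟨FreeSemigroup.lift fun j ↦ iteratedSquare a (j - (i + 1)).val, fun j hj ↦ ?_, ?_⟩
  · simp only [IsSolutionS, cyclicSquareSystem, map_mul, FreeSemigroup.lift_of,
      val_succ_sub_succ hj, iteratedSquare]
  · simpa only [IsSolutionS, cyclicSquareSystem, map_mul, FreeSemigroup.lift_of,
      sub_succ_self_eq_last, Fin.val_last, sub_self, Fin.val_zero, iteratedSquare] using ha

end Cyclic

theorem system_eq_cyclicSquareSystem : system = cyclicSquareSystem 2 := by
  funext j
  fin_cases j <;> rfl

/-- The system of the three word equations `x² = y, y² = z, z² = x` is independent,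
with solutions taken in the free semigroup on two letters. Hence is₊(3) ≥ 3. -/
theorem system_independent :
    ∀ i : Fin 3, ∃ h : FreeSemigroup (Fin 3) →ₙ* FreeSemigroup (Fin 2),
      (∀ j : Fin 3, j ≠ i → IsSolutionS h (system j)) ∧ ¬ IsSolutionS h (system i) := by
  rw [system_eq_cyclicSquareSystem]
  exact system_independent_general (iteratedSquare_ne_self (FreeSemigroup.of 0) three_ne_zero)
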